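/- arXiv:2407.13253 — 8 statements merged into one kernel-verified Lean document; each statement's English description precedes it below -/
import Mathlib

section
/- Let H be a real Hilbert space, a : H × H → ℝ a bilinear form, and C_con > 0 a constant with |a(w, v)| ≤ C_con‖w‖‖v‖ for all w, v ∈ H. Let V_h be a nonzero finite-dimensional subspace of H and β₀ > 0 a constant such that for every w_h ∈ V_h and every t < β₀‖w_h‖ there exists v_h ∈ V_h with ‖v_h‖ ≤ 1 and t ≤ a(w_h, v_h) (discrete inf-sup condition). Suppose u ∈ H and u_h ∈ V_h satisfy the Galerkin orthogonality a(u − u_h, v_h) = 0 for all v_h ∈ V_h. Then ‖u − u_h‖ ≤ (C_con/β₀) · inf_{v ∈ V_h} ‖u − v‖, with no extra additive factor 1. -/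
/-!
The Galerkin solution operator `P` is an oblique projection onto the trial space, bounded by
`K = C_con / β₀` by the discrete inf-sup condition. In an inner product space `‖I - P‖ = ‖P‖`
unless `P` is `0` or `I`: if `e` lies in the kernel and `w` in the range, then
`y = (‖w‖ / ‖e‖) e + (‖e‖ / ‖w‖) w` has the same norm as `e + w`, while `‖P y‖ = ‖e‖`. Hence
`‖e‖ ≤ K ‖e + w‖`, and taking `e = u - uh`, `w = uh - v` gives the estimate.
-/

section ObliqueProjection

variable {𝕜 E : Type*} [RCLike 𝕜] [NormedAddCommGroup E] [InnerProductSpace 𝕜 E]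

theorem norm_sq_smul_add_norm_sq_smul (x y : E) :
    ‖((‖y‖ ^ 2 : ℝ) : 𝕜) • x + ((‖x‖ ^ 2 : ℝ) : 𝕜) • y‖ = ‖x‖ * ‖y‖ * ‖x + y‖ := by
  rw [← sq_eq_sq₀ (by positivity) (by positivity), mul_pow, norm_add_sq (𝕜 := 𝕜) x y,
    norm_add_sq (𝕜 := 𝕜), inner_smul_left, inner_smul_right, RCLike.conj_ofReal,
    RCLike.re_ofReal_mul, RCLike.re_ofReal_mul, norm_smul, norm_smul,
    RCLike.norm_of_nonneg (by positivity), RCLike.norm_of_nonneg (by positivity)]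
  ring

-- The hypothesis says `‖P‖ ≤ K` and the conclusion `‖I - P‖ ≤ K`, for the projection `P` of
-- `L ⊔ W` onto `W` along `L`.
theorem norm_left_le_mul_norm_add {L W : Submodule 𝕜 E} {K : ℝ} (hW : W ≠ ⊥)
    (hK : ∀ e ∈ L, ∀ w ∈ W, ‖w‖ ≤ K * ‖e + w‖) {e w : E} (he : e ∈ L) (hw : w ∈ W) :
    ‖e‖ ≤ K * ‖e + w‖ := by
  have one_le_K : 1 ≤ K := by
    obtain ⟨z, hz, hz0⟩ := W.exists_mem_ne_zero_of_ne_bot hW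
    refine (le_mul_iff_one_le_left (norm_pos_iff.2 hz0)).1 ?_
    simpa only [zero_add] using hK 0 L.zero_mem z hz
  rcases eq_or_ne e 0 with rfl | he0
  · rw [norm_zero]
    positivity
  rcases eq_or_ne w 0 with rfl | hw0
  · rw [add_zero]
    exact le_mul_of_one_le_left (norm_nonneg e) one_le_K
  have he_pos : 0 < ‖e‖ := norm_pos_iff.2 he0
  have hw_pos : 0 < ‖w‖ := norm_pos_iff.2 hw0
  refine le_of_mul_le_mul_left ?_ (mul_pos he_pos hw_pos)
  calc ‖e‖ * ‖w‖ * ‖e‖ = ‖((‖e‖ ^ 2 : ℝ) : 𝕜) • w‖ := by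
        rw [norm_smul, RCLike.norm_of_nonneg (by positivity)]
        ring
    _ ≤ K * ‖((‖w‖ ^ 2 : ℝ) : 𝕜) • e + ((‖e‖ ^ 2 : ℝ) : 𝕜) • w‖ :=
        hK _ (L.smul_mem _ he) _ (W.smul_mem _ hw)
    _ = ‖e‖ * ‖w‖ * (K * ‖e + w‖) := by
        rw [norm_sq_smul_add_norm_sq_smul]
        ring

end ObliqueProjection

section PetrovGalerkin

variable {𝕜 : Type*} [RCLike 𝕜] {σ : 𝕜 →+* 𝕜}

/-- The discrete inf-sup (Babuška–Brezzi) condition with constant `β` for a form `a`, trial space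
`Vh` and test space `Wh`. The bound `β * ‖w‖ ≤ sup ‖a w v‖` over the unit ball of `Wh` is expressed
through the numbers `t < β * ‖w‖`, so the supremum need not be attained. A general `σ` covers
bilinear and sesquilinear forms. -/
def DiscreteInfSup {E F : Type*} [SeminormedAddCommGroup E] [Module 𝕜 E]
    [SeminormedAddCommGroup F] [Module 𝕜 F] (a : E →ₗ[𝕜] F →ₛₗ[σ] 𝕜)
    (Vh : Submodule 𝕜 E) (Wh : Submodule 𝕜 F) (β : ℝ) : Prop :=
  ∀ w ∈ Vh, ∀ t : ℝ, t < β * ‖w‖ → ∃ v ∈ Wh, ‖v‖ ≤ 1 ∧ t ≤ ‖a w v‖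

theorem DiscreteInfSup.norm_le_div_mul_norm_add {E F : Type*} [SeminormedAddCommGroup E]
    [Module 𝕜 E] [SeminormedAddCommGroup F] [Module 𝕜 F] {a : E →ₗ[𝕜] F →ₛₗ[σ] 𝕜}
    {Vh : Submodule 𝕜 E} {Wh : Submodule 𝕜 F} {C β : ℝ} (hinfsup : DiscreteInfSup a Vh Wh β)
    (hC : 0 ≤ C) (hβ : 0 < β) (hcont : ∀ w v, ‖a w v‖ ≤ C * ‖w‖ * ‖v‖)
    {e w : E} (he : ∀ v ∈ Wh, a e v = 0) (hw : w ∈ Vh) :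
    ‖w‖ ≤ C / β * ‖e + w‖ := by
  rw [div_mul_eq_mul_div, le_div_iff₀' hβ]
  refine le_of_forall_lt_imp_le_of_dense fun t ht => ?_
  obtain ⟨v, hv, hv_le_one, htv⟩ := hinfsup w hw t ht
  calc t ≤ ‖a w v‖ := htv
    _ = ‖a (e + w) v‖ := by rw [map_add, LinearMap.add_apply, he v hv, zero_add]
    _ ≤ C * ‖e + w‖ * ‖v‖ := hcont _ _
    _ ≤ C * ‖e + w‖ := mul_le_of_le_one_right (by positivity) hv_le_one

theorem galerkin_best_approximation_general {E F : Type*} [NormedAddCommGroup E]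
    [InnerProductSpace 𝕜 E] [SeminormedAddCommGroup F] [Module 𝕜 F]
    {a : E →ₗ[𝕜] F →ₛₗ[σ] 𝕜} {Vh : Submodule 𝕜 E} {Wh : Submodule 𝕜 F} {C β : ℝ}
    (hC : 0 ≤ C) (hcont : ∀ w v, ‖a w v‖ ≤ C * ‖w‖ * ‖v‖) (hVh : Vh ≠ ⊥) (hβ : 0 < β)
    (hinfsup : DiscreteInfSup a Vh Wh β) {u uh : E} (huh : uh ∈ Vh)
    (hGal : ∀ v ∈ Wh, a (u - uh) v = 0) :
    ‖u - uh‖ ≤ C / β * ⨅ v : Vh, ‖u - (v : E)‖ := by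
  let L : Submodule 𝕜 E := LinearMap.ker (a.domRestrict₂ Wh)
  have mem_L (e : E) : e ∈ L ↔ ∀ v ∈ Wh, a e v = 0 := by
    simp only [L, LinearMap.mem_ker, LinearMap.ext_iff, LinearMap.domRestrict₂_apply,
      LinearMap.zero_apply, Subtype.forall]
  have norm_trial_le : ∀ e ∈ L, ∀ w ∈ Vh, ‖w‖ ≤ C / β * ‖e + w‖ := fun e he w hw =>
    hinfsup.norm_le_div_mul_norm_add hC hβ hcont ((mem_L e).1 he) hw
  rw [Real.mul_iInf_of_nonneg (by positivity)]
  refine le_ciInf fun v => ?_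
  simpa only [sub_add_sub_cancel] using
    norm_left_le_mul_norm_add hVh norm_trial_le ((mem_L _).2 hGal) (Vh.sub_mem huh v.2)

end PetrovGalerkin

/-- sharp best-approximation property of the Galerkin method for a
bounded bilinear form satisfying a discrete inf-sup condition. -/
theorem galerkin_best_approximation
    {H : Type*} [NormedAddCommGroup H] [InnerProductSpace ℝ H] [CompleteSpace H]
    (a : H →ₗ[ℝ] H →ₗ[ℝ] ℝ) (C_con : ℝ) (hC : 0 < C_con)
    (hcont : ∀ w v : H, |a w v| ≤ C_con * ‖w‖ * ‖v‖)
    (Vh : Submodule ℝ H) [FiniteDimensional ℝ Vh] (hVh : Vh ≠ ⊥)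
    (β₀ : ℝ) (hβ₀ : 0 < β₀)
    (hinfsup : ∀ wh ∈ Vh, ∀ t : ℝ, t < β₀ * ‖wh‖ →
      ∃ vh ∈ Vh, ‖vh‖ ≤ 1 ∧ t ≤ a wh vh)
    (u uh : H) (huh : uh ∈ Vh)
    (hGal : ∀ vh ∈ Vh, a (u - uh) vh = 0) :
    ‖u - uh‖ ≤ (C_con / β₀) * ⨅ v : Vh, ‖u - (v : H)‖ := by
  have hinfsup_norm : DiscreteInfSup a Vh Vh β₀ := fun w hw t ht =>
    let ⟨v, hv, hv_le_one, htv⟩ := hinfsup w hw t ht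
    ⟨v, hv, hv_le_one, htv.trans (le_abs_self _)⟩
  exact galerkin_best_approximation_general hC.le hcont hVh hβ₀ hinfsup_norm huh hGal
end

section
/- In the abstract monotone Galerkin framework, let f ∈ H and let V_h ⊆ H be a closed subspace. Suppose u ∈ H satisfies a u v = ⟪f, v⟫ for all v ∈ H, and u_h ∈ V_h satisfies a u_h v = ⟪f, v⟫ for all v ∈ V_h. Then: (1) ‖u‖ ≤ ‖f‖ and ‖u_h‖ ≤ ‖f‖; and (2) for every v ∈ V_h, ‖u − u_h‖ ≤ L₀(1 + 2‖f‖²) ‖u − v‖; in particular ‖u − u_h‖ ≤ L₀(1 + 2‖f‖²) inf_{v ∈ V_h} ‖u − v‖. -/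
open RealInnerProductSpace

/-! A Galerkin solution `u` lies in its own test space, so testing with `u` and comparing with
`a 0` through strong monotonicity bounds `‖u‖`. The exact and the discrete solution therefore lie
in one ball, on which `a` is Lipschitz. By Galerkin orthogonality, `u - uh` may be replaced by
`u - v` in the argument of `a u - a uh`, and strong monotonicity together with the Lipschitz bound
gives quasi-optimality as in Céa's lemma. -/

section Galerkin

variable {E : Type*} [SeminormedAddCommGroup E] [NormedSpace ℝ E]
  {a : E → StrongDual ℝ E} {F : StrongDual ℝ E} {V Vh : Submodule ℝ E} {u uh v : E}
  {α : ℝ} {K : NNReal}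

/-- Strong monotonicity with constant `α` of a nonlinear operator from a space to its dual,
which supplies the coercivity in stability and error estimates. Positivity of `α` is not part of
the definition. -/
def IsStronglyMonotone (α : ℝ) (a : E → StrongDual ℝ E) : Prop :=
  ∀ w v : E, α * ‖w - v‖ ^ 2 ≤ (a w - a v) (w - v)

/-- A solution of the variational equation `a u = F` with trial and test space `V`. The exact
problem is the case `V = ⊤`, so that exact and discrete solutions are treated alike. -/
structure IsGalerkinSolution (a : E → StrongDual ℝ E) (F : StrongDual ℝ E)
    (V : Submodule ℝ E) (u : E) : Prop where
  mem : u ∈ V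
  apply_eq : ∀ v ∈ V, a u v = F v

lemma mul_le_of_mul_sq_le_mul {x c t : ℝ} (hc : 0 ≤ c) (ht : 0 ≤ t)
    (h : x * t ^ 2 ≤ c * t) : x * t ≤ c := by
  rcases ht.eq_or_lt with rfl | ht
  · simpa using hc
  · exact le_of_mul_le_mul_right (by linarith) ht

lemma IsGalerkinSolution.sub_apply_eq_zero (hu : IsGalerkinSolution a F V u)
    (huh : IsGalerkinSolution a F Vh uh) (hV : Vh ≤ V) (hv : v ∈ Vh) :
    (a u - a uh) v = 0 := by
  rw [sub_apply, hu.apply_eq v (hV hv), huh.apply_eq v hv, sub_self]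

lemma IsStronglyMonotone.mul_norm_le (ha : IsStronglyMonotone α a)
    (hu : IsGalerkinSolution a F V u) : α * ‖u‖ ≤ ‖F - a 0‖ := by
  refine mul_le_of_mul_sq_le_mul (norm_nonneg _) (norm_nonneg _) ?_
  calc α * ‖u‖ ^ 2 ≤ (a u - a 0) u := by simpa only [sub_zero] using ha u 0
    _ = (F - a 0) u := by simp only [sub_apply, hu.apply_eq u hu.mem]
    _ ≤ ‖F - a 0‖ * ‖u‖ := (Real.le_norm_self _).trans ((F - a 0).le_opNorm u)

lemma IsStronglyMonotone.mul_norm_sub_le_of_orthogonal (ha : IsStronglyMonotone α a)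
    (hK : ‖a u - a uh‖ ≤ K * ‖u - uh‖) (horth : (a u - a uh) (v - uh) = 0) :
    α * ‖u - uh‖ ≤ K * ‖u - v‖ := by
  refine mul_le_of_mul_sq_le_mul (by positivity) (norm_nonneg _) ?_
  calc α * ‖u - uh‖ ^ 2 ≤ (a u - a uh) (u - uh) := ha u uh
    _ = (a u - a uh) (u - v) := by rw [← sub_add_sub_cancel u v uh, map_add, horth, add_zero]
    _ ≤ ‖a u - a uh‖ * ‖u - v‖ := (Real.le_norm_self _).trans ((a u - a uh).le_opNorm _)
    _ ≤ K * ‖u - uh‖ * ‖u - v‖ := by gcongr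
    _ = K * ‖u - v‖ * ‖u - uh‖ := by ring

lemma lipschitzOnWith_closedBall_of_abs_sub_le {L : ℝ} (hL : 0 ≤ L)
    (hlip : ∀ z w v : E,
      |a z v - a w v| ≤ L * (1 + ‖z‖ ^ 2 + ‖w‖ ^ 2) * ‖z - w‖ * ‖v‖) (R : ℝ) :
    LipschitzOnWith (L * (1 + 2 * R ^ 2)).toNNReal a (Metric.closedBall 0 R) := by
  refine LipschitzOnWith.of_dist_le' fun z hz w hw ↦ ?_
  rw [mem_closedBall_zero_iff] at hz hw
  rw [dist_eq_norm, dist_eq_norm]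
  refine ContinuousLinearMap.opNorm_le_bound _ (by positivity) fun v ↦ ?_
  calc |a z v - a w v| ≤ L * (1 + ‖z‖ ^ 2 + ‖w‖ ^ 2) * ‖z - w‖ * ‖v‖ := hlip z w v
    _ ≤ L * (1 + R ^ 2 + R ^ 2) * ‖z - w‖ * ‖v‖ := by gcongr
    _ = L * (1 + 2 * R ^ 2) * ‖z - w‖ * ‖v‖ := by ring

theorem monotone_galerkin_apriori_general (hα : 0 < α) (ha : IsStronglyMonotone α a)
    (hlip : LipschitzOnWith K a (Metric.closedBall 0 (‖F - a 0‖ / α))) (hV : Vh ≤ V)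
    (hu : IsGalerkinSolution a F V u) (huh : IsGalerkinSolution a F Vh uh) :
    ‖u‖ ≤ ‖F - a 0‖ / α ∧ ‖uh‖ ≤ ‖F - a 0‖ / α ∧
      (∀ v ∈ Vh, ‖u - uh‖ ≤ K / α * ‖u - v‖) ∧
      ‖u - uh‖ ≤ K / α * ⨅ v : Vh, ‖u - (v : E)‖ := by
  have stability {W : Submodule ℝ E} {w : E} (hw : IsGalerkinSolution a F W w) :
      ‖w‖ ≤ ‖F - a 0‖ / α :=
    (le_div_iff₀' hα).2 (ha.mul_norm_le hw)
  have hK : ‖a u - a uh‖ ≤ K * ‖u - uh‖ :=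
    hlip.norm_sub_le (mem_closedBall_zero_iff.2 (stability hu))
      (mem_closedBall_zero_iff.2 (stability huh))
  have quasi_optimal : ∀ v ∈ Vh, ‖u - uh‖ ≤ K / α * ‖u - v‖ := fun v hv ↦ by
    rw [div_mul_eq_mul_div, le_div_iff₀' hα]
    exact ha.mul_norm_sub_le_of_orthogonal hK
      (hu.sub_apply_eq_zero huh hV (Vh.sub_mem hv huh.mem))
  refine ⟨stability hu, stability huh, quasi_optimal, ?_⟩
  rw [Real.mul_iInf_of_nonneg (by positivity)]
  exact le_ciInf fun v ↦ quasi_optimal v v.2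

end Galerkin

/-- stability and quasi-best-approximation a priori estimate for
the Galerkin method in the abstract monotone framework. -/
theorem monotone_galerkin_apriori
    {H : Type*} [NormedAddCommGroup H] [InnerProductSpace ℝ H] [CompleteSpace H]
    (a : H → H →L[ℝ] ℝ) (L₀ : ℝ) (hL₀ : 0 < L₀)
    (hmono : ∀ w v : H, ‖w - v‖ ^ 2 ≤ a w (w - v) - a v (w - v))
    (hlip : ∀ z w v : H,
      |a z v - a w v| ≤ L₀ * (1 + ‖z‖ ^ 2 + ‖w‖ ^ 2) * ‖z - w‖ * ‖v‖)
    (hzero : ∀ v : H, a 0 v = 0)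
    (f : H) (Vh : Submodule ℝ H) (hVh : IsClosed (Vh : Set H))
    (u : H) (hu : ∀ v : H, a u v = ⟪f, v⟫)
    (uh : H) (huh : uh ∈ Vh) (huh' : ∀ v ∈ Vh, a uh v = ⟪f, v⟫) :
    ‖u‖ ≤ ‖f‖ ∧ ‖uh‖ ≤ ‖f‖ ∧
      (∀ v ∈ Vh, ‖u - uh‖ ≤ L₀ * (1 + 2 * ‖f‖ ^ 2) * ‖u - v‖) ∧
      ‖u - uh‖ ≤ L₀ * (1 + 2 * ‖f‖ ^ 2) * ⨅ v : Vh, ‖u - (v : H)‖ := by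
  have ha₀ : a 0 = 0 := ContinuousLinearMap.ext hzero
  have hconst : 0 ≤ L₀ * (1 + 2 * ‖f‖ ^ 2) := by positivity
  simpa [ha₀, hconst] using
    monotone_galerkin_apriori_general (F := innerSL ℝ f) one_pos
      (fun w v ↦ by simpa using hmono w v)
      (lipschitzOnWith_closedBall_of_abs_sub_le hL₀.le hlip _) le_top
      ⟨Submodule.mem_top, fun v _ ↦ hu v⟩ ⟨huh, huh'⟩
end

section
/- In the abstract first-order-system framework with monotone nonlinearity and exact solution pair (u, σ), for every τ ∈ W and v ∈ V one has ‖u − v‖ + ‖E σ − E τ‖ ≤ 3 η(τ, v). In particular this reliability bound is independent of the data f and of the nonlinearity N. -/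
open RealInnerProductSpace

/-!
With `e = u - v` and `δ = σ - τ`, the two residuals are `-(E δ + G e)` and
`-((D δ + (N u - N v)) + ι e)`. When the squared norms of these sums are expanded, the cross terms
`⟪E δ, G e⟫ + ⟪D δ, ι e⟫` cancel by integration by parts, and the only one left,
`2 ⟪N u - N v, ι e⟫`, is nonnegative by monotonicity. So `‖e‖² + ‖E δ‖² ≤ η(τ, v)²`, which gives
the reliability constant `√2`.
-/

section LeastSquares

variable {V W Y Z : Type*}
  [SeminormedAddCommGroup V] [Module ℝ V] [AddCommGroup W] [Module ℝ W]
  [SeminormedAddCommGroup Y] [InnerProductSpace ℝ Y]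
  [SeminormedAddCommGroup Z] [InnerProductSpace ℝ Z]
  {G : V →ₗ[ℝ] Y} {ι : V →ₗ[ℝ] Z} {E : W →ₗ[ℝ] Y} {D : W →ₗ[ℝ] Z}
  {N : V → Z} {f : Z} {u : V} {σ : W}

/-- The nonlinear least-squares functional estimator `η(τ, v)` of the first-order system
`E σ = -G u`, `D σ = f - ι u - N u`: the Euclidean norm of the two residuals of `(τ, v)`. -/
noncomputable def leastSquaresEstimator (G : V →ₗ[ℝ] Y) (ι : V →ₗ[ℝ] Z) (E : W →ₗ[ℝ] Y)
    (D : W →ₗ[ℝ] Z) (N : V → Z) (f : Z) (τ : W) (v : V) : ℝ :=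
  √(‖E τ + G v‖ ^ 2 + ‖D τ + ι v + N v - f‖ ^ 2)

theorem leastSquaresEstimator_sq_eq
    (hV : ∀ v : V, ‖v‖ ^ 2 = ‖G v‖ ^ 2 + ‖ι v‖ ^ 2)
    (hibp : ∀ (τ : W) (v : V), ⟪E τ, G v⟫ + ⟪D τ, ι v⟫ = 0)
    (hσ₁ : E σ = -G u) (hσ₂ : D σ = f - ι u - N u) (τ : W) (v : V) :
    leastSquaresEstimator G ι E D N f τ v ^ 2 =
      ‖u - v‖ ^ 2 + ‖E σ - E τ‖ ^ 2 + ‖D (σ - τ) + (N u - N v)‖ ^ 2 +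
        2 * ⟪N u - N v, ι (u - v)⟫ := by
  have flux_residual : E τ + G v = -(E (σ - τ) + G (u - v)) := by
    rw [map_sub, map_sub, hσ₁]
    abel
  have equilibrium_residual :
      D τ + ι v + N v - f = -(D (σ - τ) + (N u - N v) + ι (u - v)) := by
    rw [map_sub, map_sub, hσ₂]
    abel
  rw [leastSquaresEstimator, Real.sq_sqrt (by positivity), flux_residual, equilibrium_residual,
    norm_neg, norm_neg, norm_add_sq_real, norm_add_sq_real, inner_add_left (D (σ - τ)),
    hV (u - v), ← map_sub E]
  linear_combination 2 * hibp (σ - τ) (u - v)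

theorem norm_sub_sq_add_norm_sub_sq_le_leastSquaresEstimator_sq
    (hV : ∀ v : V, ‖v‖ ^ 2 = ‖G v‖ ^ 2 + ‖ι v‖ ^ 2)
    (hibp : ∀ (τ : W) (v : V), ⟪E τ, G v⟫ + ⟪D τ, ι v⟫ = 0)
    (hσ₁ : E σ = -G u) (hσ₂ : D σ = f - ι u - N u) (τ : W) {v : V}
    (hmono : 0 ≤ ⟪N u - N v, ι (u - v)⟫) :
    ‖u - v‖ ^ 2 + ‖E σ - E τ‖ ^ 2 ≤ leastSquaresEstimator G ι E D N f τ v ^ 2 := by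
  rw [leastSquaresEstimator_sq_eq hV hibp hσ₁ hσ₂]
  linarith [sq_nonneg ‖D (σ - τ) + (N u - N v)‖]

theorem nls_reliability_f_independent_general
    (hV : ∀ v : V, ‖v‖ ^ 2 = ‖G v‖ ^ 2 + ‖ι v‖ ^ 2)
    (hibp : ∀ (τ : W) (v : V), ⟪E τ, G v⟫ + ⟪D τ, ι v⟫ = 0)
    (hσ₁ : E σ = -G u) (hσ₂ : D σ = f - ι u - N u) (τ : W) {v : V}
    (hmono : 0 ≤ ⟪N u - N v, ι (u - v)⟫) :
    ‖u - v‖ + ‖E σ - E τ‖ ≤ √2 * leastSquaresEstimator G ι E D N f τ v := by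
  have estimator_nonneg : 0 ≤ leastSquaresEstimator G ι E D N f τ v := Real.sqrt_nonneg _
  refine (sq_le_sq₀ (by positivity) (by positivity)).1 ?_
  calc (‖u - v‖ + ‖E σ - E τ‖) ^ 2
      ≤ 2 * (‖u - v‖ ^ 2 + ‖E σ - E τ‖ ^ 2) := add_sq_le
    _ ≤ 2 * leastSquaresEstimator G ι E D N f τ v ^ 2 := by
      gcongr
      exact norm_sub_sq_add_norm_sub_sq_le_leastSquaresEstimator_sq hV hibp hσ₁ hσ₂ τ hmono
    _ = (√2 * leastSquaresEstimator G ι E D N f τ v) ^ 2 := by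
      rw [mul_pow, Real.sq_sqrt zero_le_two]

end LeastSquares

/-- f-independent reliability bound of the nonlinear least-squares
functional estimator. -/
theorem nls_reliability_f_independent
    {V W Y Z : Type*}
    [NormedAddCommGroup V] [InnerProductSpace ℝ V] [CompleteSpace V]
    [NormedAddCommGroup W] [InnerProductSpace ℝ W] [CompleteSpace W]
    [NormedAddCommGroup Y] [InnerProductSpace ℝ Y] [CompleteSpace Y]
    [NormedAddCommGroup Z] [InnerProductSpace ℝ Z] [CompleteSpace Z]
    (G : V →L[ℝ] Y) (ι : V →L[ℝ] Z) (E : W →L[ℝ] Y) (D : W →L[ℝ] Z)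
    (hV : ∀ v : V, ‖v‖ ^ 2 = ‖G v‖ ^ 2 + ‖ι v‖ ^ 2)
    (hW : ∀ τ : W, ‖τ‖ ^ 2 = ‖E τ‖ ^ 2 + ‖D τ‖ ^ 2)
    (hibp : ∀ (τ : W) (v : V), ⟪E τ, G v⟫ + ⟪D τ, ι v⟫ = 0)
    (N : V → Z) (f : Z)
    (hmono : ∀ w v : V, 0 ≤ ⟪N w - N v, ι (w - v)⟫)
    (u : V) (hu : ∀ v : V, ⟪G u, G v⟫ + ⟪ι u + N u, ι v⟫ = ⟪f, ι v⟫)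
    (σ : W) (hσ1 : E σ = -G u) (hσ2 : D σ = f - ι u - N u) :
    ∀ (τ : W) (v : V),
      ‖u - v‖ + ‖E σ - E τ‖ ≤
        3 * Real.sqrt (‖E τ + G v‖ ^ 2 + ‖D τ + ι v + N v - f‖ ^ 2) := by
  intro τ v
  have sqrt_two_le_three : √2 ≤ 3 := Real.sqrt_le_iff.2 (by norm_num)
  exact (nls_reliability_f_independent_general (G := G.toLinearMap) (ι := ι.toLinearMap)
    (E := E.toLinearMap) (D := D.toLinearMap) hV hibp hσ1 hσ2 τ (hmono u v)).trans
    (mul_le_mul_of_nonneg_right sqrt_two_le_three (Real.sqrt_nonneg _))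
end

section
/- In the abstract first-order-system framework with monotone nonlinearity and exact solution pair (u, σ), let τ ∈ W and v ∈ V and suppose in addition that ‖N u − N v‖ ≤ L‖u − v‖ for some constant L ≥ 0. Then ‖u − v‖ + ‖σ − τ‖ ≤ (5 + L) η(τ, v), where ‖σ − τ‖ denotes the full W-norm (so that ‖σ − τ‖² = ‖E(σ − τ)‖² + ‖D(σ − τ)‖²). -/
open RealInnerProductSpace

/-!
In the `ℓ²`-product of `Y` and `Z`, the maps `τ ↦ (E τ, D τ)` and `v ↦ (G v, ι v)` are isometries
with orthogonal ranges. The residuals of `(σ, u)` and `(τ, v)` therefore differ by `a + b + n`,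
where `a ⊥ b` satisfy `‖a‖ = ‖σ - τ‖` and `‖b‖ = ‖u - v‖`, and `n = (0, N u - N v)` satisfies
`0 ≤ ⟪n, b⟫` by monotonicity. Since `a + n` has a nonnegative inner product with `b`, adding it to
`b` cannot decrease the norm, so `‖b‖` is bounded by the residual; then `‖a‖ ≤ ‖a + b‖` is bounded
by the residual plus `‖n‖ ≤ L ‖b‖`.
-/

open scoped InnerProductSpace

section InnerProduct

variable {𝕜 H : Type*} [RCLike 𝕜] [SeminormedAddCommGroup H] [InnerProductSpace 𝕜 H]

theorem norm_le_norm_add_of_re_inner_nonneg {x y : H} (hxy : 0 ≤ RCLike.re ⟪x, y⟫_𝕜) :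
    ‖x‖ ≤ ‖x + y‖ := by
  refine (sq_le_sq₀ (norm_nonneg _) (norm_nonneg _)).mp ?_
  rw [norm_add_sq (𝕜 := 𝕜)]
  linarith [sq_nonneg ‖y‖]

theorem norm_add_norm_le_of_inner_eq_zero_of_re_inner_nonneg {a b n : H} {L : ℝ}
    (hab : ⟪a, b⟫_𝕜 = 0) (hnb : 0 ≤ RCLike.re ⟪n, b⟫_𝕜) (hL : 0 ≤ L) (hn : ‖n‖ ≤ L * ‖b‖) :
    ‖b‖ + ‖a‖ ≤ (2 + L) * ‖a + b + n‖ := by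
  have hb : ‖b‖ ≤ ‖a + b + n‖ := by
    have hinner : 0 ≤ RCLike.re ⟪b, a + n⟫_𝕜 := by
      rwa [inner_re_symm, inner_add_left, hab, zero_add]
    calc
      ‖b‖ ≤ ‖b + (a + n)‖ := norm_le_norm_add_of_re_inner_nonneg hinner
      _ = ‖a + b + n‖ := by congr 1; abel
  have ha : ‖a‖ ≤ ‖a + b + n‖ + L * ‖a + b + n‖ :=
    calc
      ‖a‖ ≤ ‖a + b‖ := norm_le_norm_add_of_re_inner_nonneg (𝕜 := 𝕜) (by rw [hab, map_zero])
      _ = ‖a + b + n - n‖ := by rw [add_sub_cancel_right]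
      _ ≤ ‖a + b + n‖ + ‖n‖ := norm_sub_le _ _
      _ ≤ ‖a + b + n‖ + L * ‖a + b + n‖ := by grw [hn, hb]
  linarith

theorem norm_sub_add_norm_sub_le_of_orthogonal_isometries {V W : Type*}
    [SeminormedAddCommGroup V] [Module 𝕜 V] [SeminormedAddCommGroup W] [Module 𝕜 W]
    (A : W →ₗᵢ[𝕜] H) (B : V →ₗᵢ[𝕜] H) (hAB : ∀ τ v, ⟪A τ, B v⟫_𝕜 = 0) (M : V → H)
    (σ τ : W) {u v : V} {L : ℝ} (hmono : 0 ≤ RCLike.re ⟪M u - M v, B (u - v)⟫_𝕜) (hL : 0 ≤ L)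
    (hlip : ‖M u - M v‖ ≤ L * ‖u - v‖) :
    ‖u - v‖ + ‖σ - τ‖ ≤ (2 + L) * ‖(A σ + B u + M u) - (A τ + B v + M v)‖ := by
  have hresidual : (A σ + B u + M u) - (A τ + B v + M v) =
      A (σ - τ) + B (u - v) + (M u - M v) := by
    rw [map_sub, map_sub]; abel
  rw [hresidual, ← A.norm_map (σ - τ), ← B.norm_map (u - v)]
  exact norm_add_norm_le_of_inner_eq_zero_of_re_inner_nonneg (hAB _ _) hmono hL
    (by rwa [B.norm_map])

end InnerProduct

section L2Product

variable {R X Y Z : Type*} [Semiring R] [SeminormedAddCommGroup X] [Module R X]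
  [SeminormedAddCommGroup Y] [Module R Y] [SeminormedAddCommGroup Z] [Module R Z]

/-- The isometry `x ↦ (S x, T x)` into the `ℓ²`-product of `Y` and `Z`, for a pair of linear maps
such as `(G, ι)` or `(E, D)` through which the norm of `X` is defined as a graph norm. -/
noncomputable def l2ProdIsometry (S : X →ₗ[R] Y) (T : X →ₗ[R] Z)
    (hnorm : ∀ x, ‖x‖ ^ 2 = ‖S x‖ ^ 2 + ‖T x‖ ^ 2) : X →ₗᵢ[R] WithLp 2 (Y × Z) where
  toLinearMap := (WithLp.linearEquiv 2 R (Y × Z)).symm.toLinearMap ∘ₗ S.prod T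
  norm_map' x := by
    refine (sq_eq_sq₀ (norm_nonneg _) (norm_nonneg _)).mp ?_
    rw [WithLp.prod_norm_sq_eq_of_L2, hnorm]
    rfl

theorem l2ProdIsometry_apply (S : X →ₗ[R] Y) (T : X →ₗ[R] Z)
    (hnorm : ∀ x, ‖x‖ ^ 2 = ‖S x‖ ^ 2 + ‖T x‖ ^ 2) (x : X) :
    l2ProdIsometry S T hnorm x = WithLp.toLp 2 (S x, T x) :=
  rfl

end L2Product

theorem nls_full_reliability_general {𝕜 V W Y Z : Type*} [RCLike 𝕜]
    [SeminormedAddCommGroup V] [Module 𝕜 V] [SeminormedAddCommGroup W] [Module 𝕜 W]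
    [NormedAddCommGroup Y] [InnerProductSpace 𝕜 Y] [NormedAddCommGroup Z] [InnerProductSpace 𝕜 Z]
    (G : V →ₗ[𝕜] Y) (ι : V →ₗ[𝕜] Z) (E : W →ₗ[𝕜] Y) (D : W →ₗ[𝕜] Z)
    (hV : ∀ v, ‖v‖ ^ 2 = ‖G v‖ ^ 2 + ‖ι v‖ ^ 2) (hW : ∀ τ, ‖τ‖ ^ 2 = ‖E τ‖ ^ 2 + ‖D τ‖ ^ 2)
    (hibp : ∀ τ v, ⟪E τ, G v⟫_𝕜 + ⟪D τ, ι v⟫_𝕜 = 0) (N : V → Z) (f : Z) (u : V)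
    (σ : W) (hσ₁ : E σ = -G u) (hσ₂ : D σ = f - ι u - N u) {L : ℝ} (hL : 0 ≤ L) (τ : W) (v : V)
    (hmono : 0 ≤ RCLike.re ⟪N u - N v, ι (u - v)⟫_𝕜) (hlip : ‖N u - N v‖ ≤ L * ‖u - v‖) :
    ‖u - v‖ + ‖σ - τ‖ ≤
      (2 + L) * Real.sqrt (‖E τ + G v‖ ^ 2 + ‖D τ + ι v + N v - f‖ ^ 2) := by
  let A := l2ProdIsometry E D hW
  let B := l2ProdIsometry G ι hV
  let M : V → WithLp 2 (Y × Z) := fun w ↦ WithLp.toLp 2 (0, N w - f)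
  have hM : M u - M v = WithLp.toLp 2 (0, N u - N v) := by
    simp only [M, ← WithLp.toLp_sub, Prod.mk_sub_mk, sub_zero, sub_sub_sub_cancel_right]
  have hresidual (ρ : W) (w : V) :
      A ρ + B w + M w = WithLp.toLp 2 (E ρ + G w, D ρ + ι w + N w - f) := by
    simp only [A, B, M, l2ProdIsometry_apply, ← WithLp.toLp_add, Prod.mk_add_mk, add_zero,
      add_sub_assoc]
  have hexact : A σ + B u + M u = 0 := by
    rw [hresidual, hσ₁, hσ₂, neg_add_cancel, sub_add_eq_add_sub, sub_add_cancel, sub_add_cancel,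
      sub_self, Prod.mk_zero_zero, WithLp.toLp_zero]
  have hmonoM : 0 ≤ RCLike.re ⟪M u - M v, B (u - v)⟫_𝕜 := by
    rwa [hM, l2ProdIsometry_apply, WithLp.prod_inner_apply, inner_zero_left, zero_add]
  have hlipM : ‖M u - M v‖ ≤ L * ‖u - v‖ := by
    rwa [hM, WithLp.norm_toLp_snd]
  have horth (ρ : W) (w : V) : ⟪A ρ, B w⟫_𝕜 = 0 := hibp ρ w
  have hstable := norm_sub_add_norm_sub_le_of_orthogonal_isometries A B horth M σ τ hmonoM hL hlipM
  rwa [hexact, zero_sub, norm_neg, hresidual, WithLp.prod_norm_eq_of_L2] at hstable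

/-- full reliability bound of the nonlinear least-squares
functional estimator under a local Lipschitz bound on the nonlinearity. -/
theorem nls_full_reliability
    {V W Y Z : Type*}
    [NormedAddCommGroup V] [InnerProductSpace ℝ V] [CompleteSpace V]
    [NormedAddCommGroup W] [InnerProductSpace ℝ W] [CompleteSpace W]
    [NormedAddCommGroup Y] [InnerProductSpace ℝ Y] [CompleteSpace Y]
    [NormedAddCommGroup Z] [InnerProductSpace ℝ Z] [CompleteSpace Z]
    (G : V →L[ℝ] Y) (ι : V →L[ℝ] Z) (E : W →L[ℝ] Y) (D : W →L[ℝ] Z)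
    (hV : ∀ v : V, ‖v‖ ^ 2 = ‖G v‖ ^ 2 + ‖ι v‖ ^ 2)
    (hW : ∀ τ : W, ‖τ‖ ^ 2 = ‖E τ‖ ^ 2 + ‖D τ‖ ^ 2)
    (hibp : ∀ (τ : W) (v : V), ⟪E τ, G v⟫ + ⟪D τ, ι v⟫ = 0)
    (N : V → Z) (f : Z)
    (hmono : ∀ w v : V, 0 ≤ ⟪N w - N v, ι (w - v)⟫)
    (u : V) (hu : ∀ v : V, ⟪G u, G v⟫ + ⟪ι u + N u, ι v⟫ = ⟪f, ι v⟫)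
    (σ : W) (hσ1 : E σ = -G u) (hσ2 : D σ = f - ι u - N u)
    (L : ℝ) (hL : 0 ≤ L) :
    ∀ (τ : W) (v : V), ‖N u - N v‖ ≤ L * ‖u - v‖ →
      ‖u - v‖ + ‖σ - τ‖ ≤
        (5 + L) * Real.sqrt (‖E τ + G v‖ ^ 2 + ‖D τ + ι v + N v - f‖ ^ 2) := by
  intro τ v hlip
  refine (nls_full_reliability_general G.toLinearMap ι.toLinearMap E.toLinearMap D.toLinearMap
    hV hW hibp N f u σ hσ1 hσ2 hL τ v (hmono u v) hlip).trans ?_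
  exact mul_le_mul_of_nonneg_right (by linarith) (Real.sqrt_nonneg _)
end

section
/- In the abstract first-order-system framework with monotone nonlinearity and exact solution pair (u, σ), let τ ∈ W and v ∈ V and suppose in addition that ‖N u − N v‖ ≤ L‖u − v‖ for some constant L ≥ 0. Then η(τ, v) ≤ (2 + L)(‖u − v‖ + ‖σ − τ‖), where ‖σ − τ‖ denotes the full W-norm. -/
open RealInnerProductSpace

/-!
Measure the two residuals jointly in the `L²` product `Y × Z`. There the maps `(G, ι)` and `(E, D)`
are contractions, and the first-order system satisfied by `(σ, u)` writes the residual of `(τ, v)`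
as minus the sum of the images of `u - v` and `σ - τ` and of the nonlinear defect
`(0, N u - N v)`. The triangle inequality then gives
`η(τ, v) ≤ (1 + L) ‖u - v‖ + ‖σ - τ‖`, which is sharper than the claimed bound.
-/

section Residual

variable {V W Y Z : Type*} [SeminormedAddCommGroup Y] [SeminormedAddCommGroup Z]

theorem norm_toLp_two_prod_le {y : Y} {z : Z} {r : ℝ} (hr : 0 ≤ r)
    (h : ‖y‖ ^ 2 + ‖z‖ ^ 2 ≤ r ^ 2) : ‖WithLp.toLp 2 (y, z)‖ ≤ r := by
  rw [WithLp.prod_norm_eq_of_L2]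
  exact Real.sqrt_le_iff.2 ⟨hr, h⟩

/-- The residual at `(τ, v)` of the first-order system `E τ + G v = 0`, `D τ + ι v + N v = f`.
It is valued in the `L²` product, so that its norm is the least-squares estimator `η(τ, v)`. -/
def firstOrderResidual [AddMonoid V] [AddMonoid W] (G : V →+ Y) (ι : V →+ Z) (E : W →+ Y)
    (D : W →+ Z) (N : V → Z) (f : Z) (τ : W) (v : V) : WithLp 2 (Y × Z) :=
  WithLp.toLp 2 (E τ + G v, D τ + ι v + N v - f)

theorem norm_firstOrderResidual [AddMonoid V] [AddMonoid W] (G : V →+ Y) (ι : V →+ Z)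
    (E : W →+ Y) (D : W →+ Z) (N : V → Z) (f : Z) (τ : W) (v : V) :
    ‖firstOrderResidual G ι E D N f τ v‖ =
      Real.sqrt (‖E τ + G v‖ ^ 2 + ‖D τ + ι v + N v - f‖ ^ 2) :=
  WithLp.prod_norm_eq_of_L2 _

theorem firstOrderResidual_eq_neg [AddGroup V] [AddGroup W] {G : V →+ Y} {ι : V →+ Z}
    {E : W →+ Y} {D : W →+ Z} {N : V → Z} {f : Z} {u : V} {σ : W}
    (hσ₁ : E σ = -G u) (hσ₂ : D σ = f - ι u - N u) (τ : W) (v : V) :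
    firstOrderResidual G ι E D N f τ v =
      -(WithLp.toLp 2 (G (u - v), ι (u - v)) + WithLp.toLp 2 (E (σ - τ), D (σ - τ)) +
        WithLp.toLp 2 (0, N u - N v)) := by
  have hY : E τ + G v = -(G (u - v) + E (σ - τ) + 0) := by
    rw [map_sub, map_sub, hσ₁]
    abel
  have hZ : D τ + ι v + N v - f = -(ι (u - v) + D (σ - τ) + (N u - N v)) := by
    rw [map_sub, map_sub, hσ₂]
    abel
  exact congrArg (WithLp.toLp 2) (Prod.ext hY hZ)

end Residual

section Efficiency

variable {V W Y Z : Type*} [SeminormedAddCommGroup V] [SeminormedAddCommGroup W]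
  [SeminormedAddCommGroup Y] [SeminormedAddCommGroup Z]
  {G : V →+ Y} {ι : V →+ Z} {E : W →+ Y} {D : W →+ Z} {N : V → Z} {f : Z} {u : V} {σ : W}

theorem norm_firstOrderResidual_le
    (hV : ∀ v, ‖G v‖ ^ 2 + ‖ι v‖ ^ 2 ≤ ‖v‖ ^ 2) (hW : ∀ τ, ‖E τ‖ ^ 2 + ‖D τ‖ ^ 2 ≤ ‖τ‖ ^ 2)
    (hσ₁ : E σ = -G u) (hσ₂ : D σ = f - ι u - N u) (τ : W) (v : V) :
    ‖firstOrderResidual G ι E D N f τ v‖ ≤ ‖u - v‖ + ‖σ - τ‖ + ‖N u - N v‖ := by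
  rw [firstOrderResidual_eq_neg hσ₁ hσ₂, norm_neg]
  refine norm_add₃_le.trans ?_
  gcongr
  · exact norm_toLp_two_prod_le (norm_nonneg _) (hV _)
  · exact norm_toLp_two_prod_le (norm_nonneg _) (hW _)
  · exact (WithLp.norm_toLp_snd 2 Y Z _).le

variable (G ι E D) in
theorem nls_efficiency_general
    (hV : ∀ v, ‖G v‖ ^ 2 + ‖ι v‖ ^ 2 ≤ ‖v‖ ^ 2) (hW : ∀ τ, ‖E τ‖ ^ 2 + ‖D τ‖ ^ 2 ≤ ‖τ‖ ^ 2)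
    (hσ₁ : E σ = -G u) (hσ₂ : D σ = f - ι u - N u) {L : ℝ} (τ : W) (v : V)
    (hN : ‖N u - N v‖ ≤ L * ‖u - v‖) :
    Real.sqrt (‖E τ + G v‖ ^ 2 + ‖D τ + ι v + N v - f‖ ^ 2) ≤
      (1 + L) * ‖u - v‖ + ‖σ - τ‖ := by
  rw [← norm_firstOrderResidual]
  linarith [norm_firstOrderResidual_le hV hW hσ₁ hσ₂ τ v]

end Efficiency

/-- global efficiency bound of the nonlinear least-squares
functional estimator under a local Lipschitz bound on the nonlinearity. -/
theorem nls_efficiency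
    {V W Y Z : Type*}
    [NormedAddCommGroup V] [InnerProductSpace ℝ V] [CompleteSpace V]
    [NormedAddCommGroup W] [InnerProductSpace ℝ W] [CompleteSpace W]
    [NormedAddCommGroup Y] [InnerProductSpace ℝ Y] [CompleteSpace Y]
    [NormedAddCommGroup Z] [InnerProductSpace ℝ Z] [CompleteSpace Z]
    (G : V →L[ℝ] Y) (ι : V →L[ℝ] Z) (E : W →L[ℝ] Y) (D : W →L[ℝ] Z)
    (hV : ∀ v : V, ‖v‖ ^ 2 = ‖G v‖ ^ 2 + ‖ι v‖ ^ 2)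
    (hW : ∀ τ : W, ‖τ‖ ^ 2 = ‖E τ‖ ^ 2 + ‖D τ‖ ^ 2)
    (hibp : ∀ (τ : W) (v : V), ⟪E τ, G v⟫ + ⟪D τ, ι v⟫ = 0)
    (N : V → Z) (f : Z)
    (hmono : ∀ w v : V, 0 ≤ ⟪N w - N v, ι (w - v)⟫)
    (u : V) (hu : ∀ v : V, ⟪G u, G v⟫ + ⟪ι u + N u, ι v⟫ = ⟪f, ι v⟫)
    (σ : W) (hσ1 : E σ = -G u) (hσ2 : D σ = f - ι u - N u)
    (L : ℝ) (hL : 0 ≤ L) :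
    ∀ (τ : W) (v : V), ‖N u - N v‖ ≤ L * ‖u - v‖ →
      Real.sqrt (‖E τ + G v‖ ^ 2 + ‖D τ + ι v + N v - f‖ ^ 2) ≤
        (2 + L) * (‖u - v‖ + ‖σ - τ‖) := by
  intro τ v hN
  refine (nls_efficiency_general (G : V →+ Y) (ι : V →+ Z) (E : W →+ Y) (D : W →+ Z)
    (fun v ↦ (hV v).ge) (fun τ ↦ (hW τ).ge) hσ1 hσ2 τ v hN).trans ?_
  linarith [norm_nonneg (u - v), norm_nonneg (σ - τ), mul_nonneg hL (norm_nonneg (σ - τ))]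
end

section
/- In the abstract first-order-system framework, for all ρ, τ ∈ W and w, v ∈ V, the residual r := (⟪G w, G v⟫ + ⟪ι w + N w, ι v⟫ − ⟪f, ι v⟫) + ⟪E ρ + G w, E τ⟫ + ⟪D ρ + ι w + N w − f, D τ⟫ satisfies the identity r = ⟪G w + E ρ, G v + E τ⟫ + ⟪D ρ + ι w + N w − f, ι v + D τ⟫, and consequently r ≤ √2 · η(ρ, w) · (‖τ‖² + ‖v‖²)^{1/2}. -/
open RealInnerProductSpace

/-!
In the Hilbert sum `Y ⊕ Z`, let `A v = (G v, ι v)`, `B τ = (E τ, D τ)` and `F w = (0, N w - f)`.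
Integration by parts says that the ranges of `A` and `B` are orthogonal. The residual is
`⟪A w + F w, A v⟫ + ⟪B ρ + A w + F w, B τ⟫`, and since `⟪B ρ, A v⟫ = 0` it equals
`⟪B ρ + A w + F w, A v + B τ⟫`. The left factor has norm `η(ρ, w)`, so Cauchy–Schwarz and Pythagoras
for `A v + B τ` give the bound, even with constant `1` in place of `√2`.
-/

section Orthogonal

variable {H : Type*} [SeminormedAddCommGroup H] [InnerProductSpace ℝ H]

theorem inner_add_inner_add_eq_of_inner_eq_zero {b a' : H} (h : ⟪b, a'⟫ = 0) (a b' : H) :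
    ⟪a, a'⟫ + ⟪b + a, b'⟫ = ⟪b + a, a' + b'⟫ := by
  rw [inner_add_right, inner_add_left b a a', h, zero_add]

theorem abs_inner_add_le_norm_mul_sqrt_of_inner_eq_zero {a b : H} (h : ⟪a, b⟫ = 0) (x : H) :
    |⟪x, a + b⟫| ≤ ‖x‖ * √(‖a‖ ^ 2 + ‖b‖ ^ 2) := by
  have pythagoras : ‖a + b‖ = √(‖a‖ ^ 2 + ‖b‖ ^ 2) := by
    simpa only [sq] using norm_add_eq_sqrt_iff_real_inner_eq_zero.mpr h
  exact pythagoras ▸ abs_real_inner_le_norm x (a + b)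

end Orthogonal

section HilbertSum

variable {Y Z : Type*} [NormedAddCommGroup Y] [InnerProductSpace ℝ Y]
  [NormedAddCommGroup Z] [InnerProductSpace ℝ Z]

-- The inner product of `WithLp 2 (Y × Z)` unfolds to the sum of the two inner products, so `h` is
-- definitionally an orthogonality relation there.
theorem prod_inner_add_inner_add_eq_of_inner_eq_zero {e g' : Y} {d i' : Z}
    (h : ⟪e, g'⟫ + ⟪d, i'⟫ = 0) (g e' : Y) (z d' : Z) :
    ⟪g, g'⟫ + ⟪z, i'⟫ + (⟪e + g, e'⟫ + ⟪d + z, d'⟫) =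
      ⟪e + g, g' + e'⟫ + ⟪d + z, i' + d'⟫ :=
  inner_add_inner_add_eq_of_inner_eq_zero (H := WithLp 2 (Y × Z))
    (b := .toLp 2 (e, d)) (a' := .toLp 2 (g', i')) h (.toLp 2 (g, z)) (.toLp 2 (e', d'))

theorem abs_prod_inner_add_le_of_inner_eq_zero {g e : Y} {i d : Z} (h : ⟪g, e⟫ + ⟪i, d⟫ = 0)
    (y : Y) (z : Z) :
    |⟪y, g + e⟫ + ⟪z, i + d⟫| ≤
      √(‖y‖ ^ 2 + ‖z‖ ^ 2) * √((‖g‖ ^ 2 + ‖i‖ ^ 2) + (‖e‖ ^ 2 + ‖d‖ ^ 2)) := by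
  have h_sum := abs_inner_add_le_norm_mul_sqrt_of_inner_eq_zero (H := WithLp 2 (Y × Z))
    (a := .toLp 2 (g, i)) (b := .toLp 2 (e, d)) h (.toLp 2 (y, z))
  rwa [WithLp.prod_norm_sq_eq_of_L2, WithLp.prod_norm_sq_eq_of_L2,
    WithLp.prod_norm_eq_of_L2] at h_sum

end HilbertSum

theorem nls_residual_identity_and_bound_general
    {V W Y Z : Type*} [Norm V] [Norm W]
    [NormedAddCommGroup Y] [InnerProductSpace ℝ Y]
    [NormedAddCommGroup Z] [InnerProductSpace ℝ Z]
    (G : V → Y) (ι : V → Z) (E : W → Y) (D : W → Z)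
    (hV : ∀ v : V, ‖G v‖ ^ 2 + ‖ι v‖ ^ 2 ≤ ‖v‖ ^ 2)
    (hW : ∀ τ : W, ‖E τ‖ ^ 2 + ‖D τ‖ ^ 2 ≤ ‖τ‖ ^ 2)
    (hibp : ∀ (τ : W) (v : V), ⟪E τ, G v⟫ + ⟪D τ, ι v⟫ = 0)
    (N : V → Z) (f : Z) (ρ τ : W) (w v : V) (r : ℝ)
    (hr : r = (⟪G w, G v⟫ + ⟪ι w + N w, ι v⟫ - ⟪f, ι v⟫) + ⟪E ρ + G w, E τ⟫ +
      ⟪D ρ + ι w + N w - f, D τ⟫) :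
    r = ⟪G w + E ρ, G v + E τ⟫ + ⟪D ρ + ι w + N w - f, ι v + D τ⟫ ∧
      |r| ≤ √(‖E ρ + G w‖ ^ 2 + ‖D ρ + ι w + N w - f‖ ^ 2) * √(‖τ‖ ^ 2 + ‖v‖ ^ 2) := by
  have identity : r = ⟪E ρ + G w, G v + E τ⟫ + ⟪D ρ + ι w + N w - f, ι v + D τ⟫ := by
    have h := prod_inner_add_inner_add_eq_of_inner_eq_zero (hibp ρ v) (G w) (E τ)
      (ι w + N w - f) (D τ)
    simp only [← add_sub_assoc, ← add_assoc, inner_sub_left (ι w + N w)] at h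
    linarith
  refine ⟨by rw [identity, add_comm (E ρ)], ?_⟩
  have orthogonal : ⟪G v, E τ⟫ + ⟪ι v, D τ⟫ = 0 := by
    simpa only [real_inner_comm] using hibp τ v
  calc |r| ≤ √(‖E ρ + G w‖ ^ 2 + ‖D ρ + ι w + N w - f‖ ^ 2) *
        √((‖G v‖ ^ 2 + ‖ι v‖ ^ 2) + (‖E τ‖ ^ 2 + ‖D τ‖ ^ 2)) :=
      identity ▸ abs_prod_inner_add_le_of_inner_eq_zero orthogonal _ _
    _ ≤ √(‖E ρ + G w‖ ^ 2 + ‖D ρ + ι w + N w - f‖ ^ 2) * √(‖τ‖ ^ 2 + ‖v‖ ^ 2) := by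
      rw [add_comm (‖τ‖ ^ 2)]
      gcongr
      exacts [hV v, hW τ]

/-- identity and upper bound for the combined residual in terms of
the nonlinear least-squares functional estimator. -/
theorem nls_residual_identity_and_bound
    {V W Y Z : Type*}
    [NormedAddCommGroup V] [InnerProductSpace ℝ V] [CompleteSpace V]
    [NormedAddCommGroup W] [InnerProductSpace ℝ W] [CompleteSpace W]
    [NormedAddCommGroup Y] [InnerProductSpace ℝ Y] [CompleteSpace Y]
    [NormedAddCommGroup Z] [InnerProductSpace ℝ Z] [CompleteSpace Z]
    (G : V →L[ℝ] Y) (ι : V →L[ℝ] Z) (E : W →L[ℝ] Y) (D : W →L[ℝ] Z)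
    (hV : ∀ v : V, ‖v‖ ^ 2 = ‖G v‖ ^ 2 + ‖ι v‖ ^ 2)
    (hW : ∀ τ : W, ‖τ‖ ^ 2 = ‖E τ‖ ^ 2 + ‖D τ‖ ^ 2)
    (hibp : ∀ (τ : W) (v : V), ⟪E τ, G v⟫ + ⟪D τ, ι v⟫ = 0)
    (N : V → Z) (f : Z) :
    ∀ (ρ τ : W) (w v : V) (r : ℝ),
      r = (⟪G w, G v⟫ + ⟪ι w + N w, ι v⟫ - ⟪f, ι v⟫) + ⟪E ρ + G w, E τ⟫ +
            ⟪D ρ + ι w + N w - f, D τ⟫ →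
      r = ⟪G w + E ρ, G v + E τ⟫ + ⟪D ρ + ι w + N w - f, ι v + D τ⟫ ∧
      r ≤ Real.sqrt 2 *
            Real.sqrt (‖E ρ + G w‖ ^ 2 + ‖D ρ + ι w + N w - f‖ ^ 2) *
            Real.sqrt (‖τ‖ ^ 2 + ‖v‖ ^ 2) := by
  intro ρ τ w v r hr
  refine (nls_residual_identity_and_bound_general G ι E D (fun v ↦ (hV v).ge) (fun τ ↦ (hW τ).ge)
    hibp N f ρ τ w v r hr).imp_right fun bound ↦ (le_abs_self r).trans (bound.trans ?_)
  rw [mul_assoc]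
  exact le_mul_of_one_le_left (by positivity) (Real.one_le_sqrt.mpr one_le_two)
end

section
/- Let W be a real Hilbert space, (W_ℓ)_{ℓ ∈ ℕ} a sequence of closed subspaces of W with W_ℓ ⊆ W_{ℓ+1} for all ℓ, and W_∞ the topological closure of ⋃_ℓ W_ℓ. Let G_∞ and G_ℓ (ℓ ∈ ℕ) be continuous linear functionals on W such that ‖G_ℓ − G_∞‖ → 0 in the operator norm. Suppose that for each ℓ, σ_ℓ ∈ W_ℓ satisfies ⟪σ_ℓ, τ⟫ = G_ℓ τ for all τ ∈ W_ℓ, and that σ_∞ ∈ W_∞ satisfies ⟪σ_∞, τ⟫ = G_∞ τ for all τ ∈ W_∞. Then ‖σ_∞ − σ_ℓ‖ → 0 as ℓ → ∞. -/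
/-!
This is a Strang-type argument. Let `σ ∈ K` represent `G` on a subspace `K`, let `ρ` represent `H`
on `K`, and let `w ∈ K`. Testing both equations with `σ - w ∈ K` gives
`‖σ - w‖² = (G - H) (σ - w) + ⟪ρ - w, σ - w⟫`, so `‖σ - w‖ ≤ ‖G - H‖ + ‖ρ - w‖`: the error is
controlled by the perturbation of the right-hand side and the distance from `ρ` to `K`. Along an
increasing family of subspaces this distance tends to zero for `ρ` in the closure of their union.
-/

open RealInnerProductSpace

theorem tendsto_infDist_of_mem_closure_iUnion {α ι : Type*} [PseudoMetricSpace α] [Preorder ι]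
    {s : ι → Set α} (hs : Monotone s) {x : α} (hx : x ∈ closure (⋃ i, s i)) :
    Filter.Tendsto (fun i => Metric.infDist x (s i)) Filter.atTop (nhds 0) := by
  refine tendsto_order.2 ⟨fun a ha => .of_forall fun i => ha.trans_le Metric.infDist_nonneg,
    fun ε hε => ?_⟩
  obtain ⟨y, hy, hxy⟩ := Metric.mem_closure_iff.1 hx ε hε
  obtain ⟨j, hyj⟩ := Set.mem_iUnion.1 hy
  filter_upwards [Filter.eventually_ge_atTop j] with i hji
  exact (Metric.infDist_le_dist_of_mem (hs hji hyj)).trans_lt hxy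

section RieszRepresentation

variable {𝕜 E : Type*} [RCLike 𝕜] [SeminormedAddCommGroup E] [InnerProductSpace 𝕜 E]

theorem norm_le_of_norm_inner_self_le {x : E} {C : ℝ} (hC : 0 ≤ C)
    (h : ‖inner 𝕜 x x‖ ≤ C * ‖x‖) : ‖x‖ ≤ C := by
  rcases (norm_nonneg x).eq_or_lt with hx | hx
  · exact hx ▸ hC
  · rw [← inner_self_re_eq_norm, inner_self_eq_norm_mul_norm] at h
    exact le_of_mul_le_mul_right h hx

variable {K : Submodule 𝕜 E} {G H : E →L[𝕜] 𝕜} {σ ρ : E}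

theorem norm_sub_le_opNorm_sub_add_norm_sub_of_inner_eq
    (hσK : σ ∈ K) (hσ : ∀ τ ∈ K, inner 𝕜 σ τ = G τ) (hρ : ∀ τ ∈ K, inner 𝕜 ρ τ = H τ)
    {w : E} (hw : w ∈ K) : ‖σ - w‖ ≤ ‖G - H‖ + ‖ρ - w‖ := by
  have hmem : σ - w ∈ K := K.sub_mem hσK hw
  have hresidual : inner 𝕜 (σ - w) (σ - w) = (G - H) (σ - w) + inner 𝕜 (ρ - w) (σ - w) := by
    rw [inner_sub_left σ, inner_sub_left ρ, hσ _ hmem, hρ _ hmem, sub_apply]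
    ring
  refine norm_le_of_norm_inner_self_le (𝕜 := 𝕜) (by positivity) ?_
  calc ‖inner 𝕜 (σ - w) (σ - w)‖
      ≤ ‖(G - H) (σ - w)‖ + ‖inner 𝕜 (ρ - w) (σ - w)‖ := hresidual ▸ norm_add_le _ _
    _ ≤ ‖G - H‖ * ‖σ - w‖ + ‖ρ - w‖ * ‖σ - w‖ :=
        add_le_add ((G - H).le_opNorm _) (norm_inner_le_norm _ _)
    _ = (‖G - H‖ + ‖ρ - w‖) * ‖σ - w‖ := (add_mul _ _ _).symm

theorem norm_sub_le_opNorm_sub_add_two_mul_infDist_of_inner_eq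
    (hσK : σ ∈ K) (hσ : ∀ τ ∈ K, inner 𝕜 σ τ = G τ) (hρ : ∀ τ ∈ K, inner 𝕜 ρ τ = H τ) :
    ‖ρ - σ‖ ≤ ‖G - H‖ + 2 * Metric.infDist ρ (K : Set E) := by
  suffices (‖ρ - σ‖ - ‖G - H‖) / 2 ≤ Metric.infDist ρ (K : Set E) by linarith
  refine (Metric.le_infDist ⟨0, K.zero_mem⟩).2 fun {w} hw => ?_
  have hσw := norm_sub_le_opNorm_sub_add_norm_sub_of_inner_eq hσK hσ hρ hw
  have htriangle := norm_sub_le_norm_sub_add_norm_sub ρ w σ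
  rw [norm_sub_rev w σ] at htriangle
  rw [dist_eq_norm]
  linarith

end RieszRepresentation

theorem recovered_flux_limit_convergence_general
    {𝕜 E ι : Type*} [RCLike 𝕜] [SeminormedAddCommGroup E] [InnerProductSpace 𝕜 E] [Preorder ι]
    {K : ι → Submodule 𝕜 E} (hK : Monotone K) {G : ι → E →L[𝕜] 𝕜} {Glim : E →L[𝕜] 𝕜}
    (hG : Filter.Tendsto (fun i => ‖G i - Glim‖) Filter.atTop (nhds 0))
    {σ : ι → E} (hσK : ∀ i, σ i ∈ K i) (hσ : ∀ i, ∀ τ ∈ K i, inner 𝕜 (σ i) τ = G i τ)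
    {σlim : E} (hσlimK : σlim ∈ closure (⋃ i, (K i : Set E)))
    (hσlim : ∀ i, ∀ τ ∈ K i, inner 𝕜 σlim τ = Glim τ) :
    Filter.Tendsto (fun i => ‖σlim - σ i‖) Filter.atTop (nhds 0) := by
  have hdist := tendsto_infDist_of_mem_closure_iUnion (fun _ _ hij => hK hij) hσlimK
  refine squeeze_zero (fun i => norm_nonneg _) (fun i =>
    norm_sub_le_opNorm_sub_add_two_mul_infDist_of_inner_eq (hσK i) (hσ i) (hσlim i)) ?_
  simpa using hG.add (hdist.const_mul 2)

/-- convergence of Riesz-type solutions on nested subspaces to the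
solution on the closure of their union, for convergent right-hand sides. -/
theorem recovered_flux_limit_convergence
    {W : Type*} [NormedAddCommGroup W] [InnerProductSpace ℝ W] [CompleteSpace W]
    (Wsub : ℕ → Submodule ℝ W)
    (hclosed : ∀ ℓ, IsClosed ((Wsub ℓ : Set W)))
    (hnested : ∀ ℓ, Wsub ℓ ≤ Wsub (ℓ + 1))
    (Winf : Submodule ℝ W)
    (hWinf : (Winf : Set W) = closure (⋃ ℓ, (Wsub ℓ : Set W)))
    (Ginf : W →L[ℝ] ℝ) (Gl : ℕ → W →L[ℝ] ℝ)
    (hG : Filter.Tendsto (fun ℓ => ‖Gl ℓ - Ginf‖) Filter.atTop (nhds 0))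
    (σl : ℕ → W) (hσl : ∀ ℓ, σl ℓ ∈ Wsub ℓ)
    (hσl' : ∀ ℓ, ∀ τ ∈ Wsub ℓ, ⟪σl ℓ, τ⟫ = Gl ℓ τ)
    (σinf : W) (hσinf : σinf ∈ Winf)
    (hσinf' : ∀ τ ∈ Winf, ⟪σinf, τ⟫ = Ginf τ) :
    Filter.Tendsto (fun ℓ => ‖σinf - σl ℓ‖) Filter.atTop (nhds 0) := by
  have hle : ∀ ℓ, (Wsub ℓ : Set W) ⊆ Winf := fun ℓ =>
    hWinf ▸ (Set.subset_iUnion (fun n => (Wsub n : Set W)) ℓ).trans subset_closure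
  exact recovered_flux_limit_convergence_general (monotone_nat_of_le_succ hnested) hG hσl hσl'
    (hWinf ▸ hσinf) fun ℓ τ hτ => hσinf' τ (hle ℓ hτ)
end

section
/- In the abstract first-order-system framework with monotone nonlinearity and exact solution pair (u, σ), suppose (σ_∞, u_∞) ∈ W × V satisfies: ⟪G u_∞, G v⟫ + ⟪ι u_∞ + N u_∞, ι v⟫ = ⟪f, ι v⟫ for all v ∈ V, and ⟪E σ_∞ + G u_∞, E τ⟫ + ⟪D σ_∞ + ι u_∞ + N u_∞ − f, D τ⟫ = 0 for all τ ∈ W (i.e. the combined residual of (σ_∞, u_∞) vanishes on all of W × V). Then u_∞ = u and σ_∞ = σ. -/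
open RealInnerProductSpace

/-!
Both `uinf` and `u` are weak solutions. Testing the difference of their equations with
`uinf - u` shows that the energy `‖G (uinf - u)‖² + ‖ι (uinf - u)‖²` equals
`-⟪N uinf - N u, ι (uinf - u)⟫`, which monotonicity makes nonpositive; hence `uinf = u`.
The flux equation then becomes the normal equations of a linear least-squares problem whose
residual vanishes at `σ`, so testing with `σinf - σ` gives
`‖E (σinf - σ)‖² + ‖D (σinf - σ)‖² = 0`.
-/

section JointlyInjective

variable {V Y Z : Type*} [NormedAddCommGroup Y] [NormedAddCommGroup Z]

theorem injective_prod_of_norm_sq_eq [NormedAddCommGroup V] {A : V →+ Y} {B : V →+ Z}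
    (h : ∀ v, ‖v‖ ^ 2 = ‖A v‖ ^ 2 + ‖B v‖ ^ 2) : Function.Injective (A.prod B) := by
  refine (injective_iff_map_eq_zero _).2 fun v hv => ?_
  obtain ⟨hA, hB⟩ := Prod.mk.inj hv
  have hnorm : ‖v‖ ^ 2 = 0 := by simp [h v, hA, hB]
  simpa using hnorm

theorem eq_zero_of_norm_sq_add_norm_sq_nonpos [AddCommGroup V] {A : V →+ Y} {B : V →+ Z}
    (hinj : Function.Injective (A.prod B)) {v : V} (h : ‖A v‖ ^ 2 + ‖B v‖ ^ 2 ≤ 0) : v = 0 := by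
  have hA : ‖A v‖ ^ 2 = 0 := by linarith [sq_nonneg ‖A v‖, sq_nonneg ‖B v‖]
  have hB : ‖B v‖ ^ 2 = 0 := by linarith [sq_nonneg ‖A v‖, sq_nonneg ‖B v‖]
  rw [sq_eq_zero_iff, norm_eq_zero] at hA hB
  exact (injective_iff_map_eq_zero _).1 hinj v (Prod.ext hA hB)

end JointlyInjective

section FirstOrderSystem

variable {V W Y Z : Type*} [AddCommGroup V] [AddCommGroup W]
  [NormedAddCommGroup Y] [InnerProductSpace ℝ Y]
  [NormedAddCommGroup Z] [InnerProductSpace ℝ Z]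

/-- `u` is a weak solution of the abstract semilinear problem `G⋆ G u + ι⋆ (ι u + N u) = ι⋆ f`,
modelling `-Δu + u + N u = f`. -/
def IsWeakSolution (G : V →+ Y) (ι : V →+ Z) (N : V → Z) (f : Z) (u : V) : Prop :=
  ∀ v, ⟪G u, G v⟫ + ⟪ι u + N u, ι v⟫ = ⟪f, ι v⟫

/-- `σ` satisfies the normal equations of the least-squares problem of minimizing
`‖E σ - y‖ ^ 2 + ‖D σ - z‖ ^ 2`; with `y = -G u` and `z = f - ι u - N u` this is the vanishing
of the flux component of the combined residual. -/
def SatisfiesNormalEquations (E : W →+ Y) (D : W →+ Z) (y : Y) (z : Z) (σ : W) : Prop :=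
  ∀ τ, ⟪E σ - y, E τ⟫ + ⟪D σ - z, D τ⟫ = 0

variable {G : V →+ Y} {ι : V →+ Z} {N : V → Z} {f : Z} {u w : V}

theorem IsWeakSolution.norm_sq_map_sub_add_norm_sq_map_sub
    (hw : IsWeakSolution G ι N f w) (hu : IsWeakSolution G ι N f u) :
    ‖G (w - u)‖ ^ 2 + ‖ι (w - u)‖ ^ 2 = -⟪N w - N u, ι (w - u)⟫ := by
  have hdiff : ⟪G w - G u, G (w - u)⟫ + ⟪(ι w + N w) - (ι u + N u), ι (w - u)⟫ = 0 := by
    rw [inner_sub_left, inner_sub_left]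
    linarith [hw (w - u), hu (w - u)]
  rw [add_sub_add_comm, inner_add_left, ← map_sub, ← map_sub, real_inner_self_eq_norm_sq,
    real_inner_self_eq_norm_sq] at hdiff
  linarith

theorem IsWeakSolution.eq_of_monotone (hw : IsWeakSolution G ι N f w)
    (hu : IsWeakSolution G ι N f u) (hinj : Function.Injective (G.prod ι))
    (hmono : 0 ≤ ⟪N w - N u, ι (w - u)⟫) : w = u := by
  refine sub_eq_zero.1 (eq_zero_of_norm_sq_add_norm_sq_nonpos hinj ?_)
  rw [hw.norm_sq_map_sub_add_norm_sq_map_sub hu]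
  exact neg_nonpos.2 hmono

theorem SatisfiesNormalEquations.eq_of_map_eq {E : W →+ Y} {D : W →+ Z} {y : Y} {z : Z} {σ ρ : W}
    (hρ : SatisfiesNormalEquations E D y z ρ) (hinj : Function.Injective (E.prod D))
    (hE : E σ = y) (hD : D σ = z) : ρ = σ := by
  have henergy : ‖E (ρ - σ)‖ ^ 2 + ‖D (ρ - σ)‖ ^ 2 = 0 := by
    simpa only [← hE, ← hD, ← map_sub, real_inner_self_eq_norm_sq] using hρ (ρ - σ)
  exact sub_eq_zero.1 (eq_zero_of_norm_sq_add_norm_sq_nonpos hinj henergy.le)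

theorem nls_limit_identification_general {E : W →+ Y} {D : W →+ Z}
    (hGι : Function.Injective (G.prod ι)) (hED : Function.Injective (E.prod D))
    (hmono : ∀ w v : V, 0 ≤ ⟪N w - N v, ι (w - v)⟫)
    (hu : IsWeakSolution G ι N f u) {σ : W} (hσE : E σ = -G u) (hσD : D σ = f - ι u - N u)
    {σinf : W} {uinf : V} (huinf : IsWeakSolution G ι N f uinf)
    (hres : ∀ τ : W, ⟪E σinf + G uinf, E τ⟫ + ⟪D σinf + ι uinf + N uinf - f, D τ⟫ = 0) :
    uinf = u ∧ σinf = σ := by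
  have hσinf : SatisfiesNormalEquations E D (-G uinf) (f - ι uinf - N uinf) σinf := fun τ => by
    simpa only [sub_neg_eq_add, sub_sub, sub_sub_eq_add_sub, ← add_assoc] using hres τ
  obtain rfl : uinf = u := huinf.eq_of_monotone hu hGι (hmono uinf u)
  exact ⟨rfl, hσinf.eq_of_map_eq hED hσE hσD⟩

end FirstOrderSystem

/-- vanishing of the limiting combined residual on the whole space
forces identification with the exact solution pair. -/
theorem nls_limit_identification
    {V W Y Z : Type*}
    [NormedAddCommGroup V] [InnerProductSpace ℝ V] [CompleteSpace V]
    [NormedAddCommGroup W] [InnerProductSpace ℝ W] [CompleteSpace W]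
    [NormedAddCommGroup Y] [InnerProductSpace ℝ Y] [CompleteSpace Y]
    [NormedAddCommGroup Z] [InnerProductSpace ℝ Z] [CompleteSpace Z]
    (G : V →L[ℝ] Y) (ι : V →L[ℝ] Z) (E : W →L[ℝ] Y) (D : W →L[ℝ] Z)
    (hV : ∀ v : V, ‖v‖ ^ 2 = ‖G v‖ ^ 2 + ‖ι v‖ ^ 2)
    (hW : ∀ τ : W, ‖τ‖ ^ 2 = ‖E τ‖ ^ 2 + ‖D τ‖ ^ 2)
    (hibp : ∀ (τ : W) (v : V), ⟪E τ, G v⟫ + ⟪D τ, ι v⟫ = 0)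
    (N : V → Z) (f : Z)
    (hmono : ∀ w v : V, 0 ≤ ⟪N w - N v, ι (w - v)⟫)
    (u : V) (hu : ∀ v : V, ⟪G u, G v⟫ + ⟪ι u + N u, ι v⟫ = ⟪f, ι v⟫)
    (σ : W) (hσ1 : E σ = -G u) (hσ2 : D σ = f - ι u - N u)
    (σinf : W) (uinf : V)
    (h1 : ∀ v : V, ⟪G uinf, G v⟫ + ⟪ι uinf + N uinf, ι v⟫ = ⟪f, ι v⟫)
    (h2 : ∀ τ : W,
      ⟪E σinf + G uinf, E τ⟫ + ⟪D σinf + ι uinf + N uinf - f, D τ⟫ = 0) :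
    uinf = u ∧ σinf = σ := by
  exact nls_limit_identification_general (G := (G : V →+ Y)) (ι := (ι : V →+ Z))
    (E := (E : W →+ Y)) (D := (D : W →+ Z)) (injective_prod_of_norm_sq_eq hV)
    (injective_prod_of_norm_sq_eq hW) hmono hu hσ1 hσ2 h1 h2
end
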